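/- For every n ≥ 0, the truncated Laguerre polynomials satisfy the lowering relation (x² − z·x)·P_{n+1}′(x) = δ_n(x)·P_{n+1}(x) + C_n(x)·P_n(x), where δ_n(x) = (n+1)·(x − z) + Σ_{k=0}^n b_k − a_{n+1} and C_n(x) = a_{n+1}·(x + b_{n+1} − (2n + α + z + 3)). -/

import Mathlib

open MeasureTheory intervalIntegral Polynomial

/-!
A functional `L` with the Pearson equation `L (φ q' + ψ q) = 0` turns
`L (φ P_{n+1}' q)` into `- L (P_{n+1} (φ q' + ψ q))`. If `φ` and `ψ` have degree at most two and
`deg q ≤ n`, the polynomial `φ q' + ψ q` overshoots the degree of `P_{n+1}` by at most one, so the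
pairing only sees its two top coefficients. The polynomials `δ_n` and `C_n` are exactly those for
which the defect `φ P_{n+1}' - δ_n P_{n+1} - C_n P_n` has degree at most `n` and is orthogonal to
every such `q`; since `L (P_k ^ 2) ≠ 0` for all `k`, the defect vanishes. For the truncated Laguerre
weight, with `φ = X (X - z)`, the Pearson equation is integration by parts, the boundary terms
vanishing because `(x - z) x^{α+1}` is zero at `0` and at `z`.
-/

section Coefficients

variable {R : Type*}

lemma degree_sub_C_coeff_mul_lt [Ring R] {p q : R[X]} {n : ℕ} (hp : p.Monic) (hpn : p.natDegree = n)
    (hq : q.natDegree ≤ n) : (q - C (q.coeff n) * p).degree < n := by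
  rw [degree_lt_iff_coeff_zero]
  intro j hj
  rw [coeff_sub, coeff_C_mul]
  obtain rfl | hj := hj.eq_or_lt
  · have hlead : p.coeff n = 1 := hpn ▸ hp.coeff_natDegree
    rw [hlead, mul_one, sub_self]
  · rw [coeff_eq_zero_of_natDegree_lt (hq.trans_lt hj),
      coeff_eq_zero_of_natDegree_lt (hpn.trans_lt hj), mul_zero, sub_zero]

lemma coeff_X_mul_derivative [Semiring R] (p : R[X]) (n : ℕ) :
    (X * derivative p).coeff n = n * p.coeff n := by
  cases n with
  | zero => simp
  | succ n => rw [coeff_X_mul, coeff_derivative, ← Nat.cast_succ, Nat.cast_comm]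

-- Writing `(X * p).coeff n` for `p.coeff (n - 1)` keeps the formula valid at `n = 0`.
lemma coeff_mul_succ_of_natDegree_le_two [CommSemiring R] {φ : R[X]} (hφ : φ.natDegree ≤ 2)
    (p : R[X]) (n : ℕ) :
    (φ * p).coeff (n + 1) =
      φ.coeff 2 * (X * p).coeff n + φ.coeff 1 * p.coeff n + φ.coeff 0 * p.coeff (n + 1) := by
  have h : φ * p = C (φ.coeff 2) * (X * (X * p)) + C (φ.coeff 1) * (X * p) + C (φ.coeff 0) * p := by
    nth_rw 1 [eq_quadratic_of_degree_le_two (natDegree_le_iff_degree_le.mp hφ)]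
    ring
  rw [h]
  simp only [coeff_add, coeff_C_mul, coeff_X_mul]

lemma coeff_mul_derivative_succ_of_natDegree_le_two [CommSemiring R] {φ : R[X]}
    (hφ : φ.natDegree ≤ 2) (p : R[X]) (n : ℕ) :
    (φ * derivative p).coeff (n + 1) =
      φ.coeff 2 * (n * p.coeff n) + φ.coeff 1 * ((n + 1) * p.coeff (n + 1)) +
        φ.coeff 0 * ((n + 2) * p.coeff (n + 2)) := by
  rw [coeff_mul_succ_of_natDegree_le_two hφ, coeff_X_mul_derivative, coeff_derivative,
    coeff_derivative]
  push_cast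
  ring

lemma linearMap_C_mul [Semiring R] (L : R[X] →ₗ[R] R) (c : R) (p : R[X]) :
    L (C c * p) = c * L p := by
  rw [← smul_eq_C_mul, map_smul, smul_eq_mul]

end Coefficients

/-- `P` is a sequence of monic orthogonal polynomials for the functional `L`, with `P n` of degree
`n`. The condition `L (P n * P n) ≠ 0` expresses that `L` is regular (quasi-definite). -/
structure IsMonicOrthogonal {R : Type*} [CommRing R] (L : R[X] →ₗ[R] R) (P : ℕ → R[X]) : Prop where
  monic : ∀ n, (P n).Monic
  degree_eq : ∀ n, (P n).degree = n
  orthogonal : Pairwise fun m n => L (P m * P n) = 0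
  norm_ne_zero : ∀ n, L (P n * P n) ≠ 0

/-- The Pearson equation `D (φ L) = ψ L` for a functional `L`, where `D` is the distributional
derivative `⟨D L, q⟩ = -⟨L, q'⟩`. -/
def SatisfiesPearson {R : Type*} [CommRing R] (L : R[X] →ₗ[R] R) (φ ψ : R[X]) : Prop :=
  ∀ q, L (φ * derivative q + ψ * q) = 0

/-- The polynomial `δ_n`, the coefficient of `P_{n+1}` in the lowering relation
`φ P_{n+1}' = δ_n P_{n+1} + C_n P_n` of a functional with Pearson equation `D (φ L) = ψ L`,
`deg φ, deg ψ ≤ 2`; here `a` and `b` are the coefficients of the recurrence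
`X P_k = P_{k+1} + b_k P_k + a_k P_{k-1}`. -/
noncomputable def loweringDiagCoeff {R : Type*} [CommRing R] (φ ψ : R[X]) (a b : ℕ → R) (n : ℕ) :
    R[X] :=
  C ((n : R) + 1) * (C (φ.coeff 2) * X + C (φ.coeff 1)) +
    C (φ.coeff 2 * ∑ k ∈ Finset.range (n + 1), b k + ψ.coeff 2 * a (n + 1))

/-- The polynomial `C_n`, the coefficient of `P_n` in the lowering relation
`φ P_{n+1}' = δ_n P_{n+1} + C_n P_n` of a functional with Pearson equation `D (φ L) = ψ L`,
`deg φ, deg ψ ≤ 2`; here `a` and `b` are the coefficients of the recurrence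
`X P_k = P_{k+1} + b_k P_k + a_k P_{k-1}`. -/
noncomputable def loweringOffDiagCoeff {R : Type*} [CommRing R] (φ ψ : R[X]) (a b : ℕ → R) (n : ℕ) :
    R[X] :=
  -(C (a (n + 1)) *
    (C (ψ.coeff 2) * (X + C (b (n + 1))) + C ((2 * n + 1) * φ.coeff 2 + ψ.coeff 1)))

namespace IsMonicOrthogonal

variable {R : Type*} [CommRing R] {L : R[X] →ₗ[R] R} {P : ℕ → R[X]}

lemma natDegree_eq (hP : IsMonicOrthogonal L P) (n : ℕ) : (P n).natDegree = n :=
  natDegree_eq_of_degree_eq_some (hP.degree_eq n)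

lemma coeff_self (hP : IsMonicOrthogonal L P) (n : ℕ) : (P n).coeff n = 1 := by
  simpa only [hP.natDegree_eq] using (hP.monic n).coeff_natDegree

lemma coeff_eq_zero (hP : IsMonicOrthogonal L P) {n j : ℕ} (h : n < j) : (P n).coeff j = 0 :=
  coeff_eq_zero_of_natDegree_lt ((hP.natDegree_eq n).trans_lt h)

lemma map_mul_of_degree_lt (hP : IsMonicOrthogonal L P) {n : ℕ} {q : R[X]} (hq : q.degree < n) :
    L (P n * q) = 0 := by
  let S : Polynomial.Sequence R := ⟨P, hP.degree_eq⟩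
  have hspan : Submodule.span R (P '' Set.Iio n) = degreeLT R n :=
    S.span_degreeLT fun i _ => (hP.monic i).leadingCoeff ▸ isUnit_one
  have hker : degreeLT R n ≤ LinearMap.ker (L ∘ₗ LinearMap.mulLeft R (P n)) := by
    rw [← hspan, Submodule.span_le]
    rintro _ ⟨m, hm, rfl⟩
    exact hP.orthogonal (Set.mem_Iio.mp hm).ne'
  exact hker (mem_degreeLT.mpr hq)

lemma map_mul_of_natDegree_le (hP : IsMonicOrthogonal L P) {n : ℕ} {q : R[X]}
    (hq : q.natDegree ≤ n) : L (P n * q) = q.coeff n * L (P n * P n) := by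
  have hdeg : (q - C (q.coeff n) * P n).degree < n :=
    degree_sub_C_coeff_mul_lt (hP.monic n) (hP.natDegree_eq n) hq
  calc L (P n * q) = L (P n * (q - C (q.coeff n) * P n) + C (q.coeff n) * (P n * P n)) := by
        congr 1; ring
    _ = q.coeff n * L (P n * P n) := by
        rw [map_add, hP.map_mul_of_degree_lt hdeg, linearMap_C_mul, zero_add]

lemma map_mul_of_natDegree_le_succ (hP : IsMonicOrthogonal L P) {n : ℕ} {q : R[X]}
    (hq : q.natDegree ≤ n + 1) :
    L (P n * q) = (q.coeff n - q.coeff (n + 1) * (P (n + 1)).coeff n) * L (P n * P n) := by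
  have hdeg : (q - C (q.coeff (n + 1)) * P (n + 1)).natDegree ≤ n :=
    natDegree_le_iff_coeff_eq_zero.mpr <| (degree_lt_iff_coeff_zero _ _).mp <|
      degree_sub_C_coeff_mul_lt (hP.monic _) (hP.natDegree_eq _) hq
  calc L (P n * q) = L (P n * (q - C (q.coeff (n + 1)) * P (n + 1)) +
          C (q.coeff (n + 1)) * (P n * P (n + 1))) := by congr 1; ring
    _ = (q.coeff n - q.coeff (n + 1) * (P (n + 1)).coeff n) * L (P n * P n) := by
        rw [map_add, hP.map_mul_of_natDegree_le hdeg, linearMap_C_mul,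
          hP.orthogonal n.succ_ne_self.symm, mul_zero, add_zero, coeff_sub, coeff_C_mul]

lemma eq_zero_of_map_mul_natDegree_eq_zero [NoZeroDivisors R] (hP : IsMonicOrthogonal L P)
    {q : R[X]} (h : L (P q.natDegree * q) = 0) : q = 0 := by
  rw [hP.map_mul_of_natDegree_le le_rfl] at h
  exact leadingCoeff_eq_zero.mp ((mul_eq_zero.mp h).resolve_right (hP.norm_ne_zero _))

section Recurrence

variable {a b : ℕ → R}

lemma recurrence_mul_norm (hP : IsMonicOrthogonal L P)
    (hrec : ∀ n, X * P (n + 1) = P (n + 2) + C (b (n + 1)) * P (n + 1) + C (a (n + 1)) * P n)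
    (n : ℕ) : a (n + 1) * L (P n * P n) = L (P (n + 1) * P (n + 1)) := by
  have hdeg : (X * P n).natDegree ≤ n + 1 := by
    grw [natDegree_mul_le, natDegree_X_le, hP.natDegree_eq, add_comm]
  calc a (n + 1) * L (P n * P n)
      = L (P (n + 2) * P n + C (b (n + 1)) * (P (n + 1) * P n) +
          C (a (n + 1)) * (P n * P n)) := by
        rw [map_add, map_add, linearMap_C_mul, linearMap_C_mul,
          hP.orthogonal (show n + 2 ≠ n by lia), hP.orthogonal n.succ_ne_self, mul_zero, zero_add,
          zero_add]
    _ = L (P (n + 1) * (X * P n)) := by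
        congr 1
        linear_combination -P n * hrec n
    _ = L (P (n + 1) * P (n + 1)) := by
        rw [hP.map_mul_of_natDegree_le hdeg, coeff_X_mul, hP.coeff_self, one_mul]

lemma recurrence_diag_eq_coeff_sub_coeff (hP : IsMonicOrthogonal L P)
    (hrec : ∀ n, X * P (n + 1) = P (n + 2) + C (b (n + 1)) * P (n + 1) + C (a (n + 1)) * P n)
    (n : ℕ) : b (n + 1) = (P (n + 1)).coeff n - (P (n + 2)).coeff (n + 1) := by
  have h := congrArg (coeff · (n + 1)) (hrec n)
  simp only [coeff_X_mul, coeff_add, coeff_C_mul, hP.coeff_self,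
    hP.coeff_eq_zero n.lt_succ_self] at h
  linear_combination -h

lemma coeff_succ_eq_neg_sum (hP : IsMonicOrthogonal L P) (hrec₀ : X * P 0 = P 1 + C (b 0) * P 0)
    (hrec : ∀ n, X * P (n + 1) = P (n + 2) + C (b (n + 1)) * P (n + 1) + C (a (n + 1)) * P n)
    (n : ℕ) : (P (n + 1)).coeff n = -∑ k ∈ Finset.range (n + 1), b k := by
  induction n with
  | zero =>
    have h := congrArg (coeff · 0) hrec₀
    simp only [coeff_X_mul_zero, coeff_add, coeff_C_mul, hP.coeff_self] at h
    rw [Finset.sum_range_one]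
    linear_combination -h
  | succ n ih =>
    rw [Finset.sum_range_succ, hP.recurrence_diag_eq_coeff_sub_coeff hrec, ih]
    ring

lemma natDegree_lowering_defect_le (hP : IsMonicOrthogonal L P)
    (hrec₀ : X * P 0 = P 1 + C (b 0) * P 0)
    (hrec : ∀ n, X * P (n + 1) = P (n + 2) + C (b (n + 1)) * P (n + 1) + C (a (n + 1)) * P n)
    {φ : R[X]} (hφ : φ.natDegree ≤ 2) (ψ : R[X]) (n : ℕ) :
    (φ * derivative (P (n + 1)) - loweringDiagCoeff φ ψ a b n * P (n + 1) -
      loweringOffDiagCoeff φ ψ a b n * P n).natDegree ≤ n := by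
  rw [natDegree_le_iff_coeff_eq_zero]
  intro j hj
  obtain ⟨i, rfl⟩ := Nat.exists_eq_succ_of_ne_zero (Nat.ne_zero_of_lt hj)
  simp only [loweringDiagCoeff, loweringOffDiagCoeff, coeff_sub,
    coeff_mul_derivative_succ_of_natDegree_le_two hφ, add_mul, neg_mul, mul_assoc, mul_add,
    coeff_add, coeff_neg, coeff_C_mul, coeff_X_mul, Nat.succ_eq_add_one]
  obtain rfl | hi := (Nat.lt_succ_iff.mp hj).eq_or_lt
  · rw [hP.coeff_succ_eq_neg_sum hrec₀ hrec, hP.coeff_self, hP.coeff_self,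
      hP.coeff_eq_zero (by lia), hP.coeff_eq_zero (by lia)]
    ring
  obtain rfl | hi := (Nat.succ_le_iff.mpr hi).eq_or_lt
  · rw [Nat.succ_eq_add_one, hP.coeff_self, hP.coeff_eq_zero (by lia), hP.coeff_eq_zero (by lia),
      hP.coeff_eq_zero (by lia), hP.coeff_eq_zero (by lia)]
    push_cast
    ring
  · rw [hP.coeff_eq_zero (by lia), hP.coeff_eq_zero (by lia), hP.coeff_eq_zero (by lia),
      hP.coeff_eq_zero (by lia), hP.coeff_eq_zero (by lia)]
    ring

lemma map_mul_pearson_add_loweringDiagCoeff (hP : IsMonicOrthogonal L P) {φ ψ : R[X]}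
    (hφ : φ.natDegree ≤ 2) (hψ : ψ.natDegree ≤ 2) {n : ℕ} {q : R[X]} (hq : q.natDegree ≤ n) :
    L (P (n + 1) * (φ * derivative q + ψ * q + loweringDiagCoeff φ ψ a b n * q)) =
      (((2 * n + 1) * φ.coeff 2 + ψ.coeff 1) * q.coeff n + ψ.coeff 2 * (X * q).coeff n -
        ψ.coeff 2 * q.coeff n * (P (n + 2)).coeff (n + 1)) * L (P (n + 1) * P (n + 1)) := by
  have hδ : (loweringDiagCoeff φ ψ a b n).natDegree ≤ 2 := by
    unfold loweringDiagCoeff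
    compute_degree
    lia
  have hdeg : (φ * derivative q + ψ * q + loweringDiagCoeff φ ψ a b n * q).natDegree
      ≤ n + 2 := by
    have hq' : (derivative q).natDegree ≤ n :=
      (natDegree_derivative_le q).trans ((Nat.sub_le _ _).trans hq)
    have hmul {p r : R[X]} (hp : p.natDegree ≤ 2) (hr : r.natDegree ≤ n) :
        (p * r).natDegree ≤ n + 2 := by grw [natDegree_mul_le, hp, hr, add_comm]
    exact natDegree_add_le_of_degree_le
      (natDegree_add_le_of_degree_le (hmul hφ hq') (hmul hψ hq)) (hmul hδ hq)
  have hq0 {j : ℕ} (hj : n < j) : q.coeff j = 0 := coeff_eq_zero_of_natDegree_lt (hq.trans_lt hj)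
  rw [hP.map_mul_of_natDegree_le_succ hdeg]
  simp only [coeff_add, coeff_mul_derivative_succ_of_natDegree_le_two hφ,
    coeff_mul_succ_of_natDegree_le_two hψ, loweringDiagCoeff, add_mul, mul_add, mul_assoc,
    coeff_C_mul, coeff_X_mul, hq0 (show n < n + 1 by lia), hq0 (show n < n + 2 by lia),
    hq0 (show n < n + 3 by lia)]
  ring

lemma map_mul_loweringOffDiagCoeff (hP : IsMonicOrthogonal L P)
    (hrec : ∀ n, X * P (n + 1) = P (n + 2) + C (b (n + 1)) * P (n + 1) + C (a (n + 1)) * P n)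
    (φ ψ : R[X]) {n : ℕ} {q : R[X]} (hq : q.natDegree ≤ n) :
    L (P n * (loweringOffDiagCoeff φ ψ a b n * q)) =
      -(((2 * n + 1) * φ.coeff 2 + ψ.coeff 1) * q.coeff n + ψ.coeff 2 * (X * q).coeff n -
        ψ.coeff 2 * q.coeff n * (P (n + 2)).coeff (n + 1)) * L (P (n + 1) * P (n + 1)) := by
  have hC : (loweringOffDiagCoeff φ ψ a b n).natDegree ≤ 1 := by
    unfold loweringOffDiagCoeff
    compute_degree
  have hdeg : (loweringOffDiagCoeff φ ψ a b n * q).natDegree ≤ n + 1 := by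
    grw [natDegree_mul_le, hC, hq, add_comm]
  have hq0 : q.coeff (n + 1) = 0 := coeff_eq_zero_of_natDegree_lt (hq.trans_lt n.lt_succ_self)
  rw [hP.map_mul_of_natDegree_le_succ hdeg, ← hP.recurrence_mul_norm hrec]
  simp only [loweringOffDiagCoeff, hP.recurrence_diag_eq_coeff_sub_coeff hrec, neg_mul, add_mul,
    mul_add, mul_assoc, coeff_neg, coeff_add, coeff_C_mul, coeff_X_mul, hq0]
  ring

lemma map_lowering_defect_mul_eq_zero (hP : IsMonicOrthogonal L P)
    (hrec : ∀ n, X * P (n + 1) = P (n + 2) + C (b (n + 1)) * P (n + 1) + C (a (n + 1)) * P n)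
    {φ ψ : R[X]} (hφ : φ.natDegree ≤ 2) (hψ : ψ.natDegree ≤ 2) (hL : SatisfiesPearson L φ ψ)
    {n : ℕ} {q : R[X]} (hq : q.natDegree ≤ n) :
    L ((φ * derivative (P (n + 1)) - loweringDiagCoeff φ ψ a b n * P (n + 1) -
      loweringOffDiagCoeff φ ψ a b n * P n) * q) = 0 := by
  have hsplit : (φ * derivative (P (n + 1)) - loweringDiagCoeff φ ψ a b n * P (n + 1) -
        loweringOffDiagCoeff φ ψ a b n * P n) * q =
      (φ * derivative (P (n + 1) * q) + ψ * (P (n + 1) * q)) -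
        P (n + 1) * (φ * derivative q + ψ * q + loweringDiagCoeff φ ψ a b n * q) -
        P n * (loweringOffDiagCoeff φ ψ a b n * q) := by
    rw [derivative_mul]
    ring
  rw [hsplit, map_sub, map_sub, hL, hP.map_mul_pearson_add_loweringDiagCoeff hφ hψ hq,
    hP.map_mul_loweringOffDiagCoeff hrec φ ψ hq]
  ring

theorem lowering_of_satisfiesPearson [NoZeroDivisors R] (hP : IsMonicOrthogonal L P)
    (hrec₀ : X * P 0 = P 1 + C (b 0) * P 0)
    (hrec : ∀ n, X * P (n + 1) = P (n + 2) + C (b (n + 1)) * P (n + 1) + C (a (n + 1)) * P n)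
    {φ ψ : R[X]} (hφ : φ.natDegree ≤ 2) (hψ : ψ.natDegree ≤ 2) (hL : SatisfiesPearson L φ ψ)
    (n : ℕ) :
    φ * derivative (P (n + 1)) =
      loweringDiagCoeff φ ψ a b n * P (n + 1) + loweringOffDiagCoeff φ ψ a b n * P n := by
  rw [← sub_eq_zero, ← sub_sub]
  apply hP.eq_zero_of_map_mul_natDegree_eq_zero
  rw [mul_comm]
  apply hP.map_lowering_defect_mul_eq_zero hrec hφ hψ hL
  rw [hP.natDegree_eq]
  exact hP.natDegree_lowering_defect_le hrec₀ hrec hφ ψ n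

end Recurrence

end IsMonicOrthogonal

section WeightedIntegral

variable {w : ℝ → ℝ} {s t : ℝ}

lemma intervalIntegrable_eval_mul (hw : IntervalIntegrable w volume s t) (p : ℝ[X]) :
    IntervalIntegrable (fun x => p.eval x * w x) volume s t :=
  hw.continuousOn_mul p.continuousOn

/-- The moment functional `p ↦ ∫ x in s..t, p x * w x` of the weight `w`. -/
noncomputable def weightedIntegral (hw : IntervalIntegrable w volume s t) : ℝ[X] →ₗ[ℝ] ℝ where
  toFun p := ∫ x in s..t, p.eval x * w x
  map_add' p q := by
    simp only [eval_add, add_mul]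
    exact integral_add (intervalIntegrable_eval_mul hw p) (intervalIntegrable_eval_mul hw q)
  map_smul' c p := by
    simp only [eval_smul, smul_eq_mul, mul_assoc, RingHom.id_apply,
      intervalIntegral.integral_const_mul]

lemma weightedIntegral_apply (hw : IntervalIntegrable w volume s t) (p : ℝ[X]) :
    weightedIntegral hw p = ∫ x in s..t, p.eval x * w x := rfl

lemma weightedIntegral_mul_self_pos (hw : IntervalIntegrable w volume s t) (hst : s < t)
    (hpos : ∀ x ∈ Set.Ioo s t, 0 < w x) {p : ℝ[X]} (hp : p ≠ 0) :
    0 < weightedIntegral hw (p * p) := by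
  have hnonneg : 0 ≤ᵐ[volume.restrict (Set.uIoc s t)] fun x => (p * p).eval x * w x := by
    rw [Set.uIoc_of_le hst.le, ← Measure.restrict_congr_set Ioo_ae_eq_Ioc]
    filter_upwards [ae_restrict_mem measurableSet_Ioo] with x hx
    rw [eval_mul]
    exact mul_nonneg (mul_self_nonneg _) (hpos x hx).le
  have hsupp : Set.Ioo s t \ p.rootSet ℝ ⊆
      Function.support (fun x => (p * p).eval x * w x) ∩ Set.Ioc s t := by
    rintro x ⟨hx, hroot⟩
    have hpx : p.eval x ≠ 0 := fun h => hroot (by simpa [mem_rootSet, hp] using h)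
    refine ⟨?_, Set.Ioo_subset_Ioc_self hx⟩
    rw [Function.mem_support, eval_mul]
    exact mul_ne_zero (mul_ne_zero hpx hpx) (hpos x hx).ne'
  rw [weightedIntegral_apply,
    integral_pos_iff_support_of_nonneg_ae' hnonneg (intervalIntegrable_eval_mul hw _)]
  refine ⟨hst, lt_of_lt_of_le ?_ (measure_mono hsupp)⟩
  rw [measure_sdiff_null ((p.rootSet_finite ℝ).measure_zero volume)]
  exact (Measure.measure_Ioo_pos _).mpr hst

lemma isMonicOrthogonal_weightedIntegral (hw : IntervalIntegrable w volume s t) (hst : s < t)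
    (hpos : ∀ x ∈ Set.Ioo s t, 0 < w x) {P : ℕ → ℝ[X]} (hmonic : ∀ n, (P n).Monic)
    (hdeg : ∀ n, (P n).natDegree = n)
    (horth : ∀ m n, m ≠ n → ∫ x in s..t, (P m).eval x * (P n).eval x * w x = 0) :
    IsMonicOrthogonal (weightedIntegral hw) P where
  monic := hmonic
  degree_eq n := by rw [degree_eq_natDegree (hmonic n).ne_zero, hdeg]
  orthogonal m n hmn := by simpa only [weightedIntegral_apply, eval_mul] using horth m n hmn
  norm_ne_zero n := (weightedIntegral_mul_self_pos hw hst hpos (hmonic n).ne_zero).ne'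

-- `w` may be singular at the endpoints, so `φ w` enters through its continuous extension `g`.
lemma satisfiesPearson_weightedIntegral (hw : IntervalIntegrable w volume s t) (hst : s ≤ t)
    {φ ψ : ℝ[X]} {g : ℝ → ℝ} (hg : ContinuousOn g (Set.Icc s t)) (hgs : g s = 0) (hgt : g t = 0)
    (hgφ : ∀ x ∈ Set.Ioo s t, g x = φ.eval x * w x)
    (hgψ : ∀ x ∈ Set.Ioo s t, HasDerivAt g (ψ.eval x * w x) x) :
    SatisfiesPearson (weightedIntegral hw) φ ψ := by
  intro q
  have hderiv : ∀ x ∈ Set.Ioo s t, HasDerivAt (fun x => g x * q.eval x)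
      ((φ * derivative q + ψ * q).eval x * w x) x := by
    intro x hx
    refine ((hgψ x hx).mul (q.hasDerivAt x)).congr_deriv ?_
    rw [hgφ x hx, eval_add, eval_mul, eval_mul]
    ring
  have hcont : ContinuousOn (fun x => g x * q.eval x) (Set.Icc s t) := hg.mul q.continuousOn
  rw [weightedIntegral_apply, integral_eq_sub_of_hasDerivAt_of_le hst hcont hderiv
    (intervalIntegrable_eval_mul hw _), hgs, hgt, zero_mul, zero_mul, sub_zero]

end WeightedIntegral

section TruncatedLaguerre

variable {α : ℝ}

lemma intervalIntegrable_rpow_mul_exp_neg (hα : -1 < α) (z : ℝ) :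
    IntervalIntegrable (fun x => x ^ α * Real.exp (-x)) volume 0 z :=
  (intervalIntegrable_rpow' hα).mul_continuousOn (by fun_prop)

lemma satisfiesPearson_truncatedLaguerre (hα : -1 < α) {z : ℝ} (hz : 0 ≤ z) :
    SatisfiesPearson (weightedIntegral (intervalIntegrable_rpow_mul_exp_neg hα z))
      (X ^ 2 - C z * X) (X * (C (2 + α + z) - X) - C ((1 + α) * z)) := by
  have hrpow {x : ℝ} (hx : x ∈ Set.Ioo 0 z) : x ^ (α + 1) = x ^ α * x := by
    rw [Real.rpow_add hx.1, Real.rpow_one]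
  apply satisfiesPearson_weightedIntegral (g := fun x => (x - z) * x ^ (α + 1) * Real.exp (-x)) _ hz
  · have := Real.continuous_rpow_const (q := α + 1) (by linarith)
    fun_prop
  · rw [Real.zero_rpow (by linarith), mul_zero, zero_mul]
  · rw [sub_self, zero_mul, zero_mul]
  · intro x hx
    simp only [hrpow hx, eval_sub, eval_mul, eval_pow, eval_X, eval_C]
    ring
  · intro x hx
    have hderiv := (((hasDerivAt_id x).sub_const z).mul
      (Real.hasDerivAt_rpow_const (p := α + 1) (Or.inl hx.1.ne'))).mul (hasDerivAt_neg x).exp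
    refine hderiv.congr_deriv ?_
    simp only [id, Pi.mul_apply, hrpow hx, add_sub_cancel_right, eval_sub, eval_mul, eval_X, eval_C]
    ring

end TruncatedLaguerre

theorem truncated_laguerre_lowering_general {R : Type*} [CommRing R] [NoZeroDivisors R]
    {L : R[X] →ₗ[R] R} {P : ℕ → R[X]} (hP : IsMonicOrthogonal L P) {α z : R}
    (hL : SatisfiesPearson L (X ^ 2 - C z * X) (X * (C (2 + α + z) - X) - C ((1 + α) * z)))
    {a b : ℕ → R} (hrec₀ : X * P 0 = P 1 + C (b 0) * P 0)
    (hrec : ∀ n, X * P (n + 1) = P (n + 2) + C (b (n + 1)) * P (n + 1) + C (a (n + 1)) * P n)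
    (n : ℕ) :
    (X ^ 2 - C z * X) * derivative (P (n + 1)) =
      (C ((n : R) + 1) * (X - C z) + C ((∑ k ∈ Finset.range (n + 1), b k) - a (n + 1))) *
          P (n + 1) +
        (C (a (n + 1)) * (X + C (b (n + 1) - (2 * (n : R) + α + z + 3)))) * P n := by
  have hφ : (X ^ 2 - C z * X).natDegree ≤ 2 := by compute_degree
  have hψ : (X * (C (2 + α + z) - X) - C ((1 + α) * z)).natDegree ≤ 2 := by compute_degree
  have hφ₁ : (X ^ 2 - C z * X).coeff 1 = -z := by simp [coeff_X_pow]
  have hφ₂ : (X ^ 2 - C z * X).coeff 2 = 1 := by simp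
  have hψ₁ : (X * (C (2 + α + z) - X) - C ((1 + α) * z)).coeff 1 = 2 + α + z := by
    rw [coeff_sub, coeff_X_mul, coeff_sub, coeff_C_zero, coeff_X_zero, coeff_C_succ, sub_zero,
      sub_zero]
  have hψ₂ : (X * (C (2 + α + z) - X) - C ((1 + α) * z)).coeff 2 = -1 := by
    rw [coeff_sub, coeff_X_mul, coeff_sub, coeff_C_succ, coeff_X_one, coeff_C_succ, zero_sub,
      sub_zero]
  rw [hP.lowering_of_satisfiesPearson hrec₀ hrec hφ hψ hL, loweringDiagCoeff, loweringOffDiagCoeff,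
    hφ₁, hφ₂, hψ₁, hψ₂]
  simp only [map_add, map_sub, map_mul, map_neg, map_one, map_ofNat]
  ring

/-- Lowering relation for the truncated Laguerre polynomials. -/
theorem truncated_laguerre_lowering (α z : ℝ) (hα : -1 < α) (hz : 0 < z)
    (P : ℕ → Polynomial ℝ)
    (hP_monic : ∀ n, (P n).Monic)
    (hP_deg : ∀ n, (P n).natDegree = n)
    (hP_orth : ∀ m n, m ≠ n →
      ∫ x in (0:ℝ)..z, (P m).eval x * (P n).eval x * x ^ α * Real.exp (-x) = 0)
    (a b : ℕ → ℝ)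
    (ha0 : a 0 = 0)
    (hrec0 : Polynomial.X * P 0 = P 1 + Polynomial.C (b 0) * P 0)
    (hrec : ∀ n, 1 ≤ n →
      Polynomial.X * P n = P (n + 1) + Polynomial.C (b n) * P n + Polynomial.C (a n) * P (n - 1)) :
    ∀ n : ℕ,
      (Polynomial.X ^ 2 - Polynomial.C z * Polynomial.X) *
          Polynomial.derivative (P (n + 1)) =
        (Polynomial.C ((n : ℝ) + 1) * (Polynomial.X - Polynomial.C z)
            + Polynomial.C ((∑ k ∈ Finset.range (n + 1), b k) - a (n + 1))) * P (n + 1)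
          + (Polynomial.C (a (n + 1)) *
              (Polynomial.X + Polynomial.C (b (n + 1) - (2 * (n : ℝ) + α + z + 3)))) * P n :=
  truncated_laguerre_lowering_general
    (isMonicOrthogonal_weightedIntegral (intervalIntegrable_rpow_mul_exp_neg hα z) hz
      (fun x hx => mul_pos (Real.rpow_pos_of_pos hx.1 α) (Real.exp_pos (-x))) hP_monic hP_deg
      (by simpa only [← mul_assoc] using hP_orth))
    (satisfiesPearson_truncatedLaguerre hα hz.le) hrec0 fun n => hrec (n + 1) n.succ_pos
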